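/- (Cell entropy identity for entropy stable fluxes, algebraic core of Tadmor's entropy stability theorem.) Let m ∈ ℕ, v_{i−1}, v_i, v_{i+1} ∈ ℝ^m, ψ_{i−1}, ψ_i, ψ_{i+1} ∈ ℝ, and let F*₊, F*₋ ∈ ℝ^m satisfy ⟨v_{i+1} − v_i, F*₊⟩ = ψ_{i+1} − ψ_i and ⟨v_i − v_{i−1}, F*₋⟩ = ψ_i − ψ_{i−1}, with associated entropy fluxes q*₊ = ⟨(v_i + v_{i+1})/2, F*₊⟩ − (ψ_i + ψ_{i+1})/2 and q*₋ = ⟨(v_{i−1} + v_i)/2, F*₋⟩ − (ψ_{i−1} + ψ_i)/2. Let D₊, D₋ ∈ ℝ^{m×m}, set Δv₊ = v_{i+1} − v_i, Δv₋ = v_i − v_{i−1}, F̂₊ = F*₊ − ½ D₊ Δv₊, F̂₋ = F*₋ − ½ D₋ Δv₋, q̂₊ = q*₊ − ½ ⟨(v_i + v_{i+1})/2, D₊ Δv₊⟩, q̂₋ = q*₋ − ½ ⟨(v_{i−1} + v_i)/2, D₋ Δv₋⟩. Then ⟨v_i, F̂₊ − F̂₋⟩ = (q̂₊ − q̂₋)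 + ¼ (Δv₊ᵀ D₊ Δv₊ + Δv₋ᵀ D₋ Δv₋). In particular, if D₊ and D₋ are positive semidefinite, then ⟨v_i, F̂₊ − F̂₋⟩ ≥ q̂₊ − q̂₋. -/

import Mathlib

/-!
Split the value of a flux at one side of an interface into its value at the average and half its
value at the jump: `F v_L = F v̄ - ½ F Δv` and `F v_R = F v̄ + ½ F Δv`. Writing
`δ = Δψ - F Δv` for the amount by which Tadmor's condition fails, this says
`F v_L = q + ψ_L + ½ δ` and `F v_R = q + ψ_R - ½ δ`. In the difference of the fluxes through the two
faces of a cell the potential `ψ_i` cancels, and what remains besides `q₊ - q₋` is `½ (δ₊ + δ₋)`.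
Subtracting `½ d` from an entropy conservative flux produces the defect `δ = ½ d Δv`.
-/

section Interface

variable {K V : Type*} [Field K] [AddCommGroup V] [Module K V]

/-- Tadmor's condition for a numerical flux between the states `(vL, ψL)` and `(vR, ψR)`. Fluxes are
encoded as linear functionals on the space of entropy variables, so that `F v` is `⟨v, F⟩`. -/
def IsEntropyConservative (vL vR : V) (ψL ψR : K) (F : Module.Dual K V) : Prop :=
  F (vR - vL) = ψR - ψL

/-- The numerical entropy flux `⟨(vL + vR) / 2, F⟩ - (ψL + ψR) / 2` of an arbitrary numerical
flux `F`. For `F - (1 / 2) • d` it is the flux `q̂` of the entropy stable scheme. -/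
def numericalEntropyFlux (vL vR : V) (ψL ψR : K) (F : Module.Dual K V) : K :=
  F ((1 / 2 : K) • (vL + vR)) - (ψL + ψR) / 2

/-- The defect of the numerical flux `F` in Tadmor's condition, with the sign for which a
nonnegative defect means that entropy is dissipated at the interface. -/
def entropyDefect (vL vR : V) (ψL ψR : K) (F : Module.Dual K V) : K :=
  (ψR - ψL) - F (vR - vL)

theorem IsEntropyConservative.entropyDefect_sub_smul {vL vR : V} {ψL ψR : K} {F : Module.Dual K V}
    (hF : IsEntropyConservative vL vR ψL ψR F) (c : K) (d : Module.Dual K V) :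
    entropyDefect vL vR ψL ψR (F - c • d) = c * d (vR - vL) := by
  rw [entropyDefect, LinearMap.sub_apply, LinearMap.smul_apply, hF, smul_eq_mul, sub_sub_cancel]

theorem numericalEntropyFlux_sub_smul (vL vR : V) (ψL ψR c : K) (F d : Module.Dual K V) :
    numericalEntropyFlux vL vR ψL ψR (F - c • d) =
      numericalEntropyFlux vL vR ψL ψR F - c * d ((1 / 2 : K) • (vL + vR)) := by
  rw [numericalEntropyFlux, numericalEntropyFlux, LinearMap.sub_apply, LinearMap.smul_apply,
    smul_eq_mul, sub_right_comm]

variable [NeZero (2 : K)]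

theorem apply_left_eq_numericalEntropyFlux_add (vL vR : V) (ψL ψR : K) (F : Module.Dual K V) :
    F vL = numericalEntropyFlux vL vR ψL ψR F + ψL + entropyDefect vL vR ψL ψR F / 2 := by
  simp only [numericalEntropyFlux, entropyDefect, map_smul, map_add, map_sub, smul_eq_mul]
  field_simp
  ring

theorem apply_right_eq_numericalEntropyFlux_add (vL vR : V) (ψL ψR : K) (F : Module.Dual K V) :
    F vR = numericalEntropyFlux vL vR ψL ψR F + ψR - entropyDefect vL vR ψL ψR F / 2 := by
  simp only [numericalEntropyFlux, entropyDefect, map_smul, map_add, map_sub, smul_eq_mul]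
  field_simp
  ring

theorem apply_sub_eq_numericalEntropyFlux_sub_add_entropyDefect (vm vi vp : V) (ψm ψi ψp : K)
    (Fp Fm : Module.Dual K V) :
    (Fp - Fm) vi =
      numericalEntropyFlux vi vp ψi ψp Fp - numericalEntropyFlux vm vi ψm ψi Fm +
        (entropyDefect vi vp ψi ψp Fp + entropyDefect vm vi ψm ψi Fm) / 2 := by
  rw [LinearMap.sub_apply, apply_left_eq_numericalEntropyFlux_add vi vp ψi ψp Fp,
    apply_right_eq_numericalEntropyFlux_add vm vi ψm ψi Fm]
  ring

end Interface

/-- The linear functional `v ↦ ∑ l, v l * F l` represented by the coordinate vector `F`, which turns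
a flux given in coordinates into one in the sense of `IsEntropyConservative`. -/
def fluxFunctional {K ι : Type*} [CommSemiring K] [Fintype ι] :
    (ι → K) →ₗ[K] Module.Dual K (ι → K) :=
  (dotProductBilin K K).flip

theorem fluxFunctional_apply_average {K ι : Type*} [Semifield K] [Fintype ι] (F v w : ι → K) :
    fluxFunctional F ((1 / 2 : K) • (v + w)) = ∑ l, ((v l + w l) / 2) * F l := by
  refine Finset.sum_congr rfl fun l _ => ?_
  rw [Pi.smul_apply, Pi.add_apply, smul_eq_mul, one_div_mul_eq_div]

theorem cell_entropy_identity_entropy_stable_general {K V : Type*} [Field K] [LinearOrder K]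
    [IsStrictOrderedRing K] [AddCommGroup V] [Module K V] {vm vi vp : V} {ψm ψi ψp : K}
    {Fsp Fsm : Module.Dual K V} (hFp : IsEntropyConservative vi vp ψi ψp Fsp)
    (hFm : IsEntropyConservative vm vi ψm ψi Fsm) (dp dm : Module.Dual K V) :
    let Fhp := Fsp - (1 / 2 : K) • dp
    let Fhm := Fsm - (1 / 2 : K) • dm
    let qhp := numericalEntropyFlux vi vp ψi ψp Fsp - (1 / 2) * dp ((1 / 2 : K) • (vi + vp))
    let qhm := numericalEntropyFlux vm vi ψm ψi Fsm - (1 / 2) * dm ((1 / 2 : K) • (vm + vi))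
    (Fhp - Fhm) vi = (qhp - qhm) + (1 / 4) * (dp (vp - vi) + dm (vi - vm)) ∧
      (0 ≤ dp (vp - vi) → 0 ≤ dm (vi - vm) → qhp - qhm ≤ (Fhp - Fhm) vi) := by
  intro Fhp Fhm qhp qhm
  have identity : (Fhp - Fhm) vi = (qhp - qhm) + (1 / 4) * (dp (vp - vi) + dm (vi - vm)) := by
    rw [apply_sub_eq_numericalEntropyFlux_sub_add_entropyDefect vm vi vp ψm ψi ψp,
      hFp.entropyDefect_sub_smul, hFm.entropyDefect_sub_smul,
      numericalEntropyFlux_sub_smul, numericalEntropyFlux_sub_smul]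
    ring
  refine ⟨identity, fun hdp hdm => ?_⟩
  rw [identity]
  exact le_add_of_nonneg_right (by positivity)

/-- Cell entropy identity for entropy stable fluxes:
`⟨v_i, F̂₊ - F̂₋⟩ = (q̂₊ - q̂₋) + ¼ (Δv₊ᵀ D₊ Δv₊ + Δv₋ᵀ D₋ Δv₋)`; in particular if
`D₊, D₋` are positive semidefinite then `⟨v_i, F̂₊ - F̂₋⟩ ≥ q̂₊ - q̂₋`. -/
theorem cell_entropy_identity_entropy_stable (m : ℕ)
    (vm vi vp : Fin m → ℝ) (ψm ψi ψp : ℝ) (Fsp Fsm : Fin m → ℝ)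
    (hFp : ∑ l, (vp l - vi l) * Fsp l = ψp - ψi)
    (hFm : ∑ l, (vi l - vm l) * Fsm l = ψi - ψm)
    (qsp qsm : ℝ)
    (hqsp : qsp = (∑ l, ((vi l + vp l) / 2) * Fsp l) - (ψi + ψp) / 2)
    (hqsm : qsm = (∑ l, ((vm l + vi l) / 2) * Fsm l) - (ψm + ψi) / 2)
    (Dp Dm : Matrix (Fin m) (Fin m) ℝ)
    (Δvp Δvm : Fin m → ℝ) (hΔvp : Δvp = vp - vi) (hΔvm : Δvm = vi - vm)
    (Fhp Fhm : Fin m → ℝ)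
    (hFhp : Fhp = Fsp - (1/2 : ℝ) • Dp.mulVec Δvp)
    (hFhm : Fhm = Fsm - (1/2 : ℝ) • Dm.mulVec Δvm)
    (qhp qhm : ℝ)
    (hqhp : qhp = qsp - (1/2) * ∑ l, ((vi l + vp l) / 2) * Dp.mulVec Δvp l)
    (hqhm : qhm = qsm - (1/2) * ∑ l, ((vm l + vi l) / 2) * Dm.mulVec Δvm l) :
    (∑ l, vi l * (Fhp l - Fhm l) =
      (qhp - qhm) + (1/4) * ((∑ l, Δvp l * Dp.mulVec Δvp l) + ∑ l, Δvm l * Dm.mulVec Δvm l)) ∧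
    ((∀ x : Fin m → ℝ, 0 ≤ ∑ l, x l * Dp.mulVec x l) →
     (∀ x : Fin m → ℝ, 0 ≤ ∑ l, x l * Dm.mulVec x l) →
      qhp - qhm ≤ ∑ l, vi l * (Fhp l - Fhm l)) := by
  subst hqsp hqsm hΔvp hΔvm hFhp hFhm hqhp hqhm
  have h := cell_entropy_identity_entropy_stable_general
    (Fsp := fluxFunctional Fsp) (Fsm := fluxFunctional Fsm) hFp hFm
    (fluxFunctional (Dp.mulVec (vp - vi))) (fluxFunctional (Dm.mulVec (vi - vm)))
  simp only [numericalEntropyFlux, fluxFunctional_apply_average, ← map_smul, ← map_sub] at h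
  exact ⟨h.1, fun hDp hDm => h.2 (hDp _) (hDm _)⟩
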